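/- Let ω and ν be radial weights. Then P_ω : L^∞_ν̂ → H^∞_ν̂ is bounded if and only if sup_{a∈𝔻} ν̂(a) ∫_𝔻 |B^ω_a(ζ)| (ω(ζ)/ν̂(ζ)) dA(ζ) < ∞. -/

import Mathlib

open MeasureTheory Set Complex
open scoped ENNReal

noncomputable section

/-- The open unit disc in the complex plane. -/
def unitDisc : Set ℂ := Metric.ball 0 1

/-- Tail integral `ω̂(r) = ∫_r^1 ω(s) ds`. -/
def tl (ω : ℝ → ℝ) (r : ℝ) : ℝ := ∫ s in r..1, ω s

/-- Moment `ω_x = ∫_0^1 s^x ω(s) ds` (real power in the exponent). -/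
def mom (ω : ℝ → ℝ) (x : ℝ) : ℝ := ∫ s in (0:ℝ)..1, s ^ x * ω s

/-- `ω` is a radial weight: nonnegative and integrable on `[0,1)`, with positive
tail integrals. -/
def IsRadialWeight (ω : ℝ → ℝ) : Prop :=
  (∀ s ∈ Ico (0:ℝ) 1, 0 ≤ ω s) ∧ IntegrableOn ω (Ico (0:ℝ) 1) ∧
    ∀ r ∈ Ico (0:ℝ) 1, 0 < tl ω r

/-- The upper doubling class `D̂`: `sup_{0≤r<1} ω̂(r)/ω̂((1+r)/2) < ∞`. -/
def Dhat (ω : ℝ → ℝ) : Prop :=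
  ∃ C : ℝ, ∀ r ∈ Ico (0:ℝ) 1, tl ω r ≤ C * tl ω ((1 + r) / 2)

/-- The class `Ď`: there are `K > 1`, `C > 1` with `ω̂(r) ≥ C ω̂(1 - (1-r)/K)`. -/
def Dcheck (ω : ℝ → ℝ) : Prop :=
  ∃ K C : ℝ, 1 < K ∧ 1 < C ∧ ∀ r ∈ Ico (0:ℝ) 1, C * tl ω (1 - (1 - r) / K) ≤ tl ω r

/-- The class `D = D̂ ∩ Ď`. -/
def DD (ω : ℝ → ℝ) : Prop := Dhat ω ∧ Dcheck ω

/-- The Bergman reproducing kernel `B^ω_z(ζ) = Σ_n (conj z · ζ)^n / (2 ω_{2n+1})`. -/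
def bKer (ω : ℝ → ℝ) (z ζ : ℂ) : ℂ :=
  ∑' n : ℕ, (starRingEnd ℂ z * ζ) ^ n / ((2 * mom ω (2 * (n : ℝ) + 1) : ℝ) : ℂ)

/-- The integrand of the Bergman projection. -/
def bInt (ω : ℝ → ℝ) (f : ℂ → ℂ) (z ζ : ℂ) : ℂ :=
  f ζ * starRingEnd ℂ (bKer ω z ζ) * ((ω ‖ζ‖ : ℝ) : ℂ)

/-- The Bergman projection `P_ω f(z) = ∫_𝔻 f(ζ) conj(B^ω_z(ζ)) ω(ζ) dA(ζ)`,
where `dA` is normalized area measure `dx dy / π`. -/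
def bProj (ω : ℝ → ℝ) (f : ℂ → ℂ) (z : ℂ) : ℂ :=
  (Real.pi : ℂ)⁻¹ * ∫ ζ in unitDisc, bInt ω f z ζ

/-- The weighted sup-norm `ess sup_{z ∈ 𝔻} |f(z)| v(|z|)`, valued in `ℝ≥0∞`. -/
def wSup (v : ℝ → ℝ) (f : ℂ → ℂ) : ℝ≥0∞ :=
  essSup (fun z => ENNReal.ofReal (‖f z‖ * v ‖z‖)) (volume.restrict unitDisc)

/-- `P_ω : L^∞_v → H^∞_v` is bounded: there is `C > 0` so that for every
`f ∈ L^∞_v` the defining integral converges absolutely at every point of `𝔻`,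
`P_ω f` is analytic on `𝔻`, and `‖P_ω f‖_{L^∞_v} ≤ C ‖f‖_{L^∞_v}`. -/
def ProjBddH (ω v : ℝ → ℝ) : Prop :=
  ∃ C : ℝ, 0 < C ∧ ∀ f : ℂ → ℂ,
    AEStronglyMeasurable f (volume.restrict unitDisc) → wSup v f < ⊤ →
    (∀ z ∈ unitDisc, IntegrableOn (bInt ω f z) unitDisc) ∧
    DifferentiableOn ℂ (bProj ω f) unitDisc ∧
    wSup v (bProj ω f) ≤ ENNReal.ofReal C * wSup v f

/-- `P_ω : L^∞_v → B^∞_v` is bounded: there is `C > 0` so that for every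
`f ∈ L^∞_v` the defining integral converges absolutely at every point of `𝔻`,
`P_ω f` is analytic on `𝔻`, and `‖P_ω f‖_{B^∞_v} ≤ C ‖f‖_{L^∞_v}`. -/
def ProjBddB (ω v : ℝ → ℝ) : Prop :=
  ∃ C : ℝ, 0 < C ∧ ∀ f : ℂ → ℂ,
    AEStronglyMeasurable f (volume.restrict unitDisc) → wSup v f < ⊤ →
    (∀ z ∈ unitDisc, IntegrableOn (bInt ω f z) unitDisc) ∧
    DifferentiableOn ℂ (bProj ω f) unitDisc ∧
    ∀ z ∈ unitDisc,
      ENNReal.ofReal ((1 - ‖z‖) * v ‖z‖ * ‖deriv (bProj ω f) z‖) ≤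
        ENNReal.ofReal C * wSup v f

/-- The moment condition `sup_{x ≥ 0} (ν_x / ω_{2x}) (ω/ν̂)_x < ∞`. -/
def MomCond (ω ν : ℝ → ℝ) : Prop :=
  ∃ C : ℝ, ∀ x : ℝ, 0 ≤ x →
    mom ν x / mom ω (2 * x) * mom (fun s => ω s / tl ν s) x ≤ C

/-- The tail condition `sup_{0 ≤ r < 1} (ν̂(r)/ω̂(r)) ∫_r^1 ω(s)/ν̂(s) ds < ∞`. -/
def TailCond (ω ν : ℝ → ℝ) : Prop :=
  ∃ C : ℝ, ∀ r ∈ Ico (0:ℝ) 1, tl ν r / tl ω r * tl (fun s => ω s / tl ν s) r ≤ C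

/-!
Since `|f| v ≤ ‖f‖`, the integrand of `P_ω f(z)` is dominated by
`‖f‖ |B^ω_z| ω/v`, so the integral condition bounds `‖P_ω f‖` at once. At `z = 0` the kernel is
constant, so the condition also makes `f ω` integrable; the moment bound
`r^x ω̂(r) ≤ ω_x` makes the kernel series converge absolutely for `|z| < 1`, and integrating it
term by term shows that `P_ω f` is a power series.

Conversely, `f = B^ω_a / (|B^ω_a| v)` has norm at most one and `P_ω f(a)` is exactly
`∫_𝔻 |B^ω_a| (ω/v) dA`. The norm of `P_ω f` is only an essential supremum, but `|P_ω f| v` is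
continuous, so the norm controls its value at the single point `a`.
-/

theorem le_essSup_restrict_of_continuousOn {X β : Type*} [TopologicalSpace X] [MeasurableSpace X]
    {μ : Measure X} [μ.IsOpenPosMeasure] [CompleteLinearOrder β] [TopologicalSpace β]
    [OrderTopology β] [FirstCountableTopology β] {U : Set X} {g : X → β} (hU : IsOpen U)
    (hg : ContinuousOn g U) {x : X} (hx : x ∈ U) : g x ≤ essSup g (μ.restrict U) := by
  have hmax : (fun y => g y ⊔ essSup g (μ.restrict U)) =ᵐ[μ.restrict U]
      fun _ => essSup g (μ.restrict U) := by
    filter_upwards [ae_le_essSup (f := g)] with y hy using sup_eq_right.2 hy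
  exact sup_eq_right.1 (Measure.eqOn_open_of_ae_eq hmax hU
    (hg.sup continuousOn_const) continuousOn_const hx)

theorem differentiableOn_tsum_mul_pow {c : ℕ → ℂ} {R : ℝ}
    (hc : ∀ ρ ∈ Ico 0 R, Summable fun n => ‖c n‖ * ρ ^ n) :
    DifferentiableOn ℂ (fun z => ∑' n, c n * z ^ n) (Metric.ball 0 R) := by
  intro z hz
  obtain ⟨ρ, hzρ, hρR⟩ := exists_between (mem_ball_zero_iff.1 hz)
  have hρ : DifferentiableOn ℂ (fun z => ∑' n, c n * z ^ n) (Metric.ball 0 ρ) := by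
    refine differentiableOn_tsum_of_summable_norm (hc ρ ⟨(norm_nonneg z).trans hzρ.le, hρR⟩)
      (fun n => by fun_prop) Metric.isOpen_ball fun n w hw => ?_
    rw [norm_mul, norm_pow]
    gcongr
    exact (mem_ball_zero_iff.1 hw).le
  exact (hρ.differentiableAt
    (Metric.isOpen_ball.mem_nhds (mem_ball_zero_iff.2 hzρ))).differentiableWithinAt

theorem isOpen_unitDisc : IsOpen unitDisc := Metric.isOpen_ball

theorem measurableSet_unitDisc : MeasurableSet unitDisc := isOpen_unitDisc.measurableSet

theorem norm_mem_Ico_of_mem_unitDisc {z : ℂ} (hz : z ∈ unitDisc) : ‖z‖ ∈ Ico (0 : ℝ) 1 :=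
  ⟨norm_nonneg z, mem_ball_zero_iff.1 hz⟩

theorem continuousOn_comp_norm_unitDisc {v : ℝ → ℝ} (hv : ContinuousOn v (Ico 0 1)) :
    ContinuousOn (fun ζ : ℂ => v ‖ζ‖) unitDisc :=
  hv.comp continuous_norm.continuousOn fun _ => norm_mem_Ico_of_mem_unitDisc

/-! ### Radial weights and their moments -/

namespace IsRadialWeight

variable {ω : ℝ → ℝ}

theorem integrableOn_Icc (hω : IsRadialWeight ω) : IntegrableOn ω (Icc 0 1) :=
  (integrableOn_Icc_iff_integrableOn_Ico).2 hω.2.1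

theorem apply_norm_nonneg (hω : IsRadialWeight ω) {ζ : ℂ} (hζ : ζ ∈ unitDisc) : 0 ≤ ω ‖ζ‖ :=
  hω.1 _ (norm_mem_Ico_of_mem_unitDisc hζ)

theorem continuousOn_tl (hω : IsRadialWeight ω) : ContinuousOn (tl ω) (Ico 0 1) := by
  have h := intervalIntegral.continuousOn_primitive_interval_left (μ := volume) (f := ω)
    (a := 0) (b := 1) (by rw [uIcc_of_le zero_le_one]; exact hω.integrableOn_Icc)
  rw [uIcc_of_le zero_le_one] at h
  exact h.mono Ico_subset_Icc_self

theorem aestronglyMeasurable_apply_norm (hω : IsRadialWeight ω) :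
    AEStronglyMeasurable (fun ζ : ℂ => ω ‖ζ‖) (volume.restrict unitDisc) := by
  have hpolar : IntegrableOn (fun r : ℝ => r ^ (2 - 1) * ω r) (Icc 0 1) :=
    hω.integrableOn_Icc.continuousOn_mul (continuous_pow _).continuousOn isCompact_Icc
  have hint : IntegrableOn (fun ζ : ℂ => ω ‖ζ‖) unitDisc := by
    rw [unitDisc, integrableOn_fun_norm_addHaar, Complex.finrank_real_complex]
    exact hpolar.mono_set Ioo_subset_Icc_self
  exact hint.aestronglyMeasurable

theorem rpow_mul_tl_le_mom (hω : IsRadialWeight ω) {r x : ℝ} (hr : r ∈ Ico (0 : ℝ) 1)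
    (hx : 0 ≤ x) : r ^ x * tl ω r ≤ mom ω x := by
  have hω01 : IntervalIntegrable ω volume 0 1 :=
    (intervalIntegrable_iff_integrableOn_Icc_of_le zero_le_one).2 hω.integrableOn_Icc
  have hxω01 : IntervalIntegrable (fun s => s ^ x * ω s) volume 0 1 :=
    hω01.continuousOn_mul (Real.continuous_rpow_const hx).continuousOn
  have hsub : uIcc r 1 ⊆ uIcc 0 1 := by
    rw [uIcc_of_le hr.2.le, uIcc_of_le zero_le_one]
    exact Icc_subset_Icc_left hr.1
  have hnonneg : 0 ≤ᵐ[volume.restrict (Ioc 0 1)] fun s => s ^ x * ω s := by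
    rw [← restrict_Ioo_eq_restrict_Ioc]
    filter_upwards [ae_restrict_mem measurableSet_Ioo] with s hs
    exact mul_nonneg (Real.rpow_nonneg hs.1.le _) (hω.1 s ⟨hs.1.le, hs.2⟩)
  calc r ^ x * tl ω r = ∫ s in r..1, r ^ x * ω s :=
        (intervalIntegral.integral_const_mul _ _).symm
    _ ≤ ∫ s in r..1, s ^ x * ω s := by
        refine intervalIntegral.integral_mono_on_of_le_Ioo hr.2.le
          ((hω01.mono_set hsub).const_mul _) (hxω01.mono_set hsub) fun s hs => ?_
        exact mul_le_mul_of_nonneg_right (Real.rpow_le_rpow hr.1 hs.1.le hx)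
          (hω.1 s ⟨hr.1.trans hs.1.le, hs.2⟩)
    _ ≤ mom ω x := intervalIntegral.integral_mono_interval hr.1 hr.2.le le_rfl hnonneg hxω01

theorem mom_pos (hω : IsRadialWeight ω) {x : ℝ} (hx : 0 ≤ x) : 0 < mom ω x := by
  have hr : (1 / 2 : ℝ) ∈ Ico (0 : ℝ) 1 := by norm_num
  exact (mul_pos (by positivity) (hω.2.2 _ hr)).trans_le (hω.rpow_mul_tl_le_mom hr hx)

end IsRadialWeight

/-! ### The Bergman kernel -/

/-- The coefficient `1 / (2 ω_{2n+1})` of the power series of the Bergman kernel `B^ω_z`. -/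
def kerCoeff (ω : ℝ → ℝ) (n : ℕ) : ℝ := (2 * mom ω (2 * (n : ℝ) + 1))⁻¹

theorem bKer_eq_tsum (ω : ℝ → ℝ) (z ζ : ℂ) :
    bKer ω z ζ = ∑' n, (kerCoeff ω n : ℂ) * (starRingEnd ℂ z * ζ) ^ n :=
  tsum_congr fun n => by rw [kerCoeff, Complex.ofReal_inv, div_eq_inv_mul]

theorem conj_bKer (ω : ℝ → ℝ) (z ζ : ℂ) :
    starRingEnd ℂ (bKer ω z ζ) = ∑' n, (kerCoeff ω n : ℂ) * (z * starRingEnd ℂ ζ) ^ n := by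
  rw [bKer_eq_tsum, Complex.conj_tsum]
  simp only [map_mul, map_pow, Complex.conj_ofReal, Complex.conj_conj]

theorem bKer_zero_left (ω : ℝ → ℝ) (ζ : ℂ) : bKer ω 0 ζ = kerCoeff ω 0 := by
  rw [bKer_eq_tsum, tsum_eq_single 0 fun n hn => by simp [hn]]
  simp

section Projection

variable {ω v : ℝ → ℝ} {f : ℂ → ℂ} {z ζ : ℂ}

theorem kerCoeff_pos (hω : IsRadialWeight ω) (n : ℕ) : 0 < kerCoeff ω n :=
  inv_pos.2 (mul_pos two_pos (hω.mom_pos (by positivity)))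

theorem kerCoeff_le (hω : IsRadialWeight ω) {r : ℝ} (hr : r ∈ Ioo (0 : ℝ) 1) (n : ℕ) :
    kerCoeff ω n ≤ (2 * (r * tl ω r))⁻¹ * ((r ^ 2)⁻¹) ^ n := by
  have hr' : r ∈ Ico (0 : ℝ) 1 := Ioo_subset_Ico_self hr
  have hr0 : 0 < r := hr.1
  have htl : 0 < tl ω r := hω.2.2 r hr'
  have hpow : r ^ (2 * (n : ℝ) + 1) = (r ^ 2) ^ n * r := by
    rw [← pow_mul, ← pow_succ, ← Real.rpow_natCast]
    norm_cast
  have hmom : (r ^ 2) ^ n * r * tl ω r ≤ mom ω (2 * (n : ℝ) + 1) :=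
    hpow ▸ hω.rpow_mul_tl_le_mom hr' (by positivity)
  calc kerCoeff ω n ≤ (2 * ((r ^ 2) ^ n * r * tl ω r))⁻¹ := by unfold kerCoeff; gcongr
    _ = (2 * (r * tl ω r))⁻¹ * ((r ^ 2)⁻¹) ^ n := by
        rw [inv_pow, ← mul_inv]
        ring

theorem summable_kerCoeff_mul_pow (hω : IsRadialWeight ω) {ρ : ℝ} (hρ : ρ ∈ Ico (0 : ℝ) 1) :
    Summable fun n => kerCoeff ω n * ρ ^ n := by
  have hρ0 : 0 ≤ ρ := hρ.1
  obtain ⟨r, hρr, hr1⟩ : ∃ r, √ρ < r ∧ r < 1 :=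
    exists_between (by rw [Real.sqrt_lt' one_pos, one_pow]; exact hρ.2)
  have hr0 : 0 < r := (Real.sqrt_nonneg ρ).trans_lt hρr
  have hratio : (r ^ 2)⁻¹ * ρ < 1 := by
    rw [inv_mul_lt_one₀ (by positivity)]
    exact (Real.sqrt_lt' hr0).1 hρr
  refine Summable.of_nonneg_of_le
    (fun n => mul_nonneg (kerCoeff_pos hω n).le (pow_nonneg hρ0 n)) (fun n => ?_)
    ((summable_geometric_of_lt_one (by positivity) hratio).mul_left (2 * (r * tl ω r))⁻¹)
  rw [mul_pow, ← mul_assoc]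
  gcongr
  exact kerCoeff_le hω ⟨hr0, hr1⟩ n

theorem continuousOn_bKer (hω : IsRadialWeight ω) (hz : z ∈ unitDisc) :
    ContinuousOn (bKer ω z) unitDisc := by
  simp only [funext (bKer_eq_tsum ω z)]
  refine continuousOn_tsum (fun n => by fun_prop)
    (summable_kerCoeff_mul_pow hω (norm_mem_Ico_of_mem_unitDisc hz)) fun n ζ hζ => ?_
  have hzζ : ‖starRingEnd ℂ z * ζ‖ ≤ ‖z‖ := by
    rw [norm_mul, RCLike.norm_conj]
    exact mul_le_of_le_one_right (norm_nonneg z) (norm_mem_Ico_of_mem_unitDisc hζ).2.le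
  rw [norm_mul, norm_pow, Complex.norm_of_nonneg (kerCoeff_pos hω n).le]
  have := (kerCoeff_pos hω n).le
  gcongr

theorem aestronglyMeasurable_bKer (hω : IsRadialWeight ω) (hz : z ∈ unitDisc) :
    AEStronglyMeasurable (bKer ω z) (volume.restrict unitDisc) :=
  (continuousOn_bKer hω hz).aestronglyMeasurable measurableSet_unitDisc

theorem aestronglyMeasurable_bInt (hω : IsRadialWeight ω)
    (hf : AEStronglyMeasurable f (volume.restrict unitDisc)) (hz : z ∈ unitDisc) :
    AEStronglyMeasurable (bInt ω f z) (volume.restrict unitDisc) :=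
  (hf.mul (Complex.continuous_conj.comp_aestronglyMeasurable
    (aestronglyMeasurable_bKer hω hz))).mul
    (Complex.continuous_ofReal.comp_aestronglyMeasurable hω.aestronglyMeasurable_apply_norm)

theorem integrableOn_mul_of_integrableOn_bInt_zero (hω : IsRadialWeight ω)
    (hf : IntegrableOn (bInt ω f 0) unitDisc) :
    IntegrableOn (fun ζ => f ζ * (ω ‖ζ‖ : ℂ)) unitDisc := by
  have hc : (kerCoeff ω 0 : ℂ) ≠ 0 := by exact_mod_cast (kerCoeff_pos hω 0).ne'
  refine (hf.const_mul (kerCoeff ω 0 : ℂ)⁻¹).congr (Filter.Eventually.of_forall fun ζ => ?_)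
  simp only [bInt, bKer_zero_left, Complex.conj_ofReal]
  field_simp

/-! ### Analyticity of the projection -/

/-- The moment `∫_𝔻 conj(ζ)^n g(ζ) dx dy` against a conjugated monomial; for `g = f ω` these give,
up to the kernel coefficients, the Taylor coefficients of `P_ω f`. -/
def conjMoment (g : ℂ → ℂ) (n : ℕ) : ℂ := ∫ ζ in unitDisc, starRingEnd ℂ ζ ^ n * g ζ

theorem norm_conj_pow_mul_le (w : ℂ) (n : ℕ) (hζ : ζ ∈ unitDisc) :
    ‖starRingEnd ℂ ζ ^ n * w‖ ≤ ‖w‖ := by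
  rw [norm_mul, norm_pow, RCLike.norm_conj]
  exact mul_le_of_le_one_left (norm_nonneg w)
    (pow_le_one₀ (norm_nonneg ζ) (norm_mem_Ico_of_mem_unitDisc hζ).2.le)

theorem integrableOn_conj_pow_mul {g : ℂ → ℂ} (hg : IntegrableOn g unitDisc) (n : ℕ) :
    IntegrableOn (fun ζ => starRingEnd ℂ ζ ^ n * g ζ) unitDisc := by
  refine Integrable.mono hg ((Complex.continuous_conj.pow n).aestronglyMeasurable.mul hg.1) ?_
  filter_upwards [ae_restrict_mem measurableSet_unitDisc] with ζ hζ
    using norm_conj_pow_mul_le (g ζ) n hζ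

theorem integral_norm_conj_pow_mul_le {g : ℂ → ℂ} (hg : IntegrableOn g unitDisc) (n : ℕ) :
    ∫ ζ in unitDisc, ‖starRingEnd ℂ ζ ^ n * g ζ‖ ≤ ∫ ζ in unitDisc, ‖g ζ‖ :=
  setIntegral_mono_on (integrableOn_conj_pow_mul hg n).norm hg.norm measurableSet_unitDisc
    fun ζ hζ => norm_conj_pow_mul_le (g ζ) n hζ

theorem norm_conjMoment_le {g : ℂ → ℂ} (hg : IntegrableOn g unitDisc) (n : ℕ) :
    ‖conjMoment g n‖ ≤ ∫ ζ in unitDisc, ‖g ζ‖ :=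
  (norm_integral_le_integral_norm _).trans (integral_norm_conj_pow_mul_le hg n)

theorem hasSum_integral_bInt (hω : IsRadialWeight ω)
    (hf : IntegrableOn (fun ζ => f ζ * (ω ‖ζ‖ : ℂ)) unitDisc) (hz : z ∈ unitDisc) :
    HasSum (fun n => kerCoeff ω n * conjMoment (fun ζ => f ζ * (ω ‖ζ‖ : ℂ)) n * z ^ n)
      (∫ ζ in unitDisc, bInt ω f z ζ) := by
  set g : ℂ → ℂ := fun ζ => f ζ * (ω ‖ζ‖ : ℂ)
  let F : ℕ → ℂ → ℂ := fun n ζ => kerCoeff ω n * z ^ n * (starRingEnd ℂ ζ ^ n * g ζ)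
  have hF_int (n : ℕ) : IntegrableOn (F n) unitDisc :=
    (integrableOn_conj_pow_mul hf n).const_mul _
  have hF_norm (n : ℕ) :
      ∫ ζ in unitDisc, ‖F n ζ‖ ≤ kerCoeff ω n * ‖z‖ ^ n * ∫ ζ in unitDisc, ‖g ζ‖ := by
    have hcoeff := (kerCoeff_pos hω n).le
    have hF (ζ : ℂ) :
        ‖F n ζ‖ = kerCoeff ω n * ‖z‖ ^ n * ‖starRingEnd ℂ ζ ^ n * g ζ‖ := by
      rw [norm_mul, norm_mul, norm_pow, Complex.norm_of_nonneg hcoeff]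
    simp only [hF, integral_const_mul]
    exact mul_le_mul_of_nonneg_left (integral_norm_conj_pow_mul_le hf n) (by positivity)
  have hF_summable : Summable fun n => ∫ ζ in unitDisc, ‖F n ζ‖ :=
    Summable.of_nonneg_of_le (fun n => integral_nonneg fun ζ => norm_nonneg _) hF_norm
      ((summable_kerCoeff_mul_pow hω (norm_mem_Ico_of_mem_unitDisc hz)).mul_right _)
  have hF_tsum (ζ : ℂ) : ∑' n, F n ζ = bInt ω f z ζ := by
    rw [bInt, conj_bKer, ← tsum_mul_left, ← tsum_mul_right]
    exact tsum_congr fun n => by simp only [F, g]; ring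
  have hsum := hasSum_integral_of_summable_integral_norm hF_int hF_summable
  simp only [hF_tsum, F, integral_const_mul] at hsum
  exact hsum.congr_fun fun n => by rw [conjMoment]; ring

theorem differentiableOn_bProj (hω : IsRadialWeight ω)
    (hf : IntegrableOn (fun ζ => f ζ * (ω ‖ζ‖ : ℂ)) unitDisc) :
    DifferentiableOn ℂ (bProj ω f) unitDisc := by
  set g : ℂ → ℂ := fun ζ => f ζ * (ω ‖ζ‖ : ℂ)
  have hseries : DifferentiableOn ℂ
      (fun z => ∑' n, kerCoeff ω n * conjMoment g n * z ^ n) unitDisc := by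
    refine differentiableOn_tsum_mul_pow fun ρ hρ => Summable.of_nonneg_of_le
      (fun n => mul_nonneg (norm_nonneg _) (pow_nonneg hρ.1 n)) (fun n => ?_)
      ((summable_kerCoeff_mul_pow hω hρ).mul_left (∫ ζ in unitDisc, ‖g ζ‖))
    have hcoeff := (kerCoeff_pos hω n).le
    have hρn := pow_nonneg hρ.1 n
    rw [norm_mul, Complex.norm_of_nonneg hcoeff, mul_comm (kerCoeff ω n), mul_assoc]
    gcongr
    exact norm_conjMoment_le hf n
  exact (hseries.const_mul (Real.pi : ℂ)⁻¹).congr fun z hz => by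
    rw [bProj, (hasSum_integral_bInt hω hf hz).tsum_eq]

/-! ### The norm of the projection and the mass of the kernel -/

/-- The mass `∫_𝔻 |B^ω_a| (ω/v) dx dy` of the Bergman kernel at `a`, which controls `P_ω f(a)` in
terms of the `v`-weighted sup-norm of `f`. It is `π` times the integral with respect to the
normalized area measure `dA`. -/
def kerMass (ω v : ℝ → ℝ) (a : ℂ) : ℝ≥0∞ :=
  ∫⁻ ζ in unitDisc, ENNReal.ofReal (‖bKer ω a ζ‖ * (ω ‖ζ‖ / v ‖ζ‖))

theorem enorm_bProj (ω : ℝ → ℝ) (f : ℂ → ℂ) (z : ℂ) :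
    ‖bProj ω f z‖ₑ = ENNReal.ofReal Real.pi⁻¹ * ‖∫ ζ in unitDisc, bInt ω f z ζ‖ₑ := by
  rw [bProj, enorm_mul, ← Complex.ofReal_inv, ← ofReal_norm,
    Complex.norm_of_nonneg (inv_nonneg.2 Real.pi_pos.le)]

theorem enorm_bInt (hω : IsRadialWeight ω) (hpos : ∀ r ∈ Ico (0 : ℝ) 1, 0 < v r)
    (f : ℂ → ℂ) (z : ℂ) (hζ : ζ ∈ unitDisc) :
    ‖bInt ω f z ζ‖ₑ = ENNReal.ofReal (‖f ζ‖ * v ‖ζ‖) *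
      ENNReal.ofReal (‖bKer ω z ζ‖ * (ω ‖ζ‖ / v ‖ζ‖)) := by
  have hvζ := hpos _ (norm_mem_Ico_of_mem_unitDisc hζ)
  rw [← ENNReal.ofReal_mul (by positivity), ← ofReal_norm, bInt, norm_mul, norm_mul,
    RCLike.norm_conj, Complex.norm_of_nonneg (hω.apply_norm_nonneg hζ)]
  congr 1
  field_simp

theorem lintegral_enorm_bInt_le (hω : IsRadialWeight ω) (hpos : ∀ r ∈ Ico (0 : ℝ) 1, 0 < v r)
    (hf : wSup v f ≠ ⊤) (z : ℂ) :
    ∫⁻ ζ in unitDisc, ‖bInt ω f z ζ‖ₑ ≤ wSup v f * kerMass ω v z := by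
  rw [kerMass, ← lintegral_const_mul' _ _ hf]
  refine lintegral_mono_ae ?_
  filter_upwards [ae_restrict_mem measurableSet_unitDisc,
    ENNReal.ae_le_essSup fun ζ => ENNReal.ofReal (‖f ζ‖ * v ‖ζ‖)] with ζ hζ hfζ
  rw [enorm_bInt hω hpos f z hζ]
  gcongr
  exact hfζ

theorem wSup_bProj_le {C : ℝ≥0∞} (hω : IsRadialWeight ω)
    (hpos : ∀ r ∈ Ico (0 : ℝ) 1, 0 < v r)
    (hC : ∀ a ∈ unitDisc, ENNReal.ofReal (v ‖a‖) * kerMass ω v a ≤ C) (hf : wSup v f ≠ ⊤) :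
    wSup v (bProj ω f) ≤ ENNReal.ofReal Real.pi⁻¹ * C * wSup v f := by
  refine essSup_le_of_ae_le _ ?_
  filter_upwards [ae_restrict_mem measurableSet_unitDisc] with z hz
  calc ENNReal.ofReal (‖bProj ω f z‖ * v ‖z‖)
      = ENNReal.ofReal Real.pi⁻¹ * ‖∫ ζ in unitDisc, bInt ω f z ζ‖ₑ * ENNReal.ofReal (v ‖z‖) := by
        rw [ENNReal.ofReal_mul (norm_nonneg _), ofReal_norm, enorm_bProj]
    _ ≤ ENNReal.ofReal Real.pi⁻¹ * (wSup v f * kerMass ω v z) * ENNReal.ofReal (v ‖z‖) := by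
        gcongr
        exact (enorm_integral_le_lintegral_enorm _).trans (lintegral_enorm_bInt_le hω hpos hf z)
    _ = ENNReal.ofReal Real.pi⁻¹ * (ENNReal.ofReal (v ‖z‖) * kerMass ω v z) * wSup v f := by ring
    _ ≤ ENNReal.ofReal Real.pi⁻¹ * C * wSup v f := by
        gcongr
        exact hC z hz

theorem projBddH_of_kerMass_le {C : ℝ} (hω : IsRadialWeight ω)
    (hpos : ∀ r ∈ Ico (0 : ℝ) 1, 0 < v r)
    (hC : ∀ a ∈ unitDisc, ENNReal.ofReal (v ‖a‖) * kerMass ω v a ≤ ENNReal.ofReal C) :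
    ProjBddH ω v := by
  have hmass : ∀ a ∈ unitDisc, kerMass ω v a < ⊤ := fun a ha =>
    ENNReal.lt_top_of_mul_ne_top_right ((hC a ha).trans_lt ENNReal.ofReal_lt_top).ne
      (ENNReal.ofReal_pos.2 (hpos _ (norm_mem_Ico_of_mem_unitDisc ha))).ne'
  refine ⟨Real.pi⁻¹ * max C 1, by positivity, fun f hfm hf => ?_⟩
  have hint : ∀ z ∈ unitDisc, IntegrableOn (bInt ω f z) unitDisc := fun z hz =>
    ⟨aestronglyMeasurable_bInt hω hfm hz, (lintegral_enorm_bInt_le hω hpos hf.ne z).trans_lt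
      (ENNReal.mul_lt_top hf (hmass z hz))⟩
  refine ⟨hint, differentiableOn_bProj hω
    (integrableOn_mul_of_integrableOn_bInt_zero hω (hint 0 (Metric.mem_ball_self one_pos))), ?_⟩
  rw [ENNReal.ofReal_mul (by positivity)]
  exact wSup_bProj_le hω hpos
    (fun a ha => (hC a ha).trans (ENNReal.ofReal_le_ofReal (le_max_left C 1))) hf.ne

/-! ### The extremal function -/

/-- The function `B^ω_a / (|B^ω_a| v)`, which maximizes `|P_ω f(a)|` among all `f` of `v`-weighted
sup-norm at most one. At the zeros of `B^ω_a` division by zero gives it the value `0`. -/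
def extremal (ω v : ℝ → ℝ) (a ζ : ℂ) : ℂ := bKer ω a ζ / ((‖bKer ω a ζ‖ * v ‖ζ‖ : ℝ) : ℂ)

theorem aestronglyMeasurable_extremal {a : ℂ} (hω : IsRadialWeight ω)
    (hv : ContinuousOn v (Ico 0 1)) (ha : a ∈ unitDisc) :
    AEStronglyMeasurable (extremal ω v a) (volume.restrict unitDisc) := by
  have hker := aestronglyMeasurable_bKer hω ha
  have hvm : AEStronglyMeasurable (fun ζ : ℂ => v ‖ζ‖) (volume.restrict unitDisc) :=
    (continuousOn_comp_norm_unitDisc hv).aestronglyMeasurable measurableSet_unitDisc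
  exact hker.div₀ (Complex.continuous_ofReal.comp_aestronglyMeasurable (hker.norm.mul hvm))

theorem wSup_extremal_le_one (ω : ℝ → ℝ) (hpos : ∀ r ∈ Ico (0 : ℝ) 1, 0 < v r) (a : ℂ) :
    wSup v (extremal ω v a) ≤ 1 := by
  refine essSup_le_of_ae_le _ ?_
  filter_upwards [ae_restrict_mem measurableSet_unitDisc] with ζ hζ
  have hvζ := hpos _ (norm_mem_Ico_of_mem_unitDisc hζ)
  have hnorm : ‖extremal ω v a ζ‖ * v ‖ζ‖ = ‖bKer ω a ζ‖ / ‖bKer ω a ζ‖ := by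
    rw [extremal, norm_div, Complex.norm_of_nonneg (by positivity)]
    field_simp
  rw [hnorm, ENNReal.ofReal_le_one]
  exact div_self_le_one _

theorem bInt_extremal (ω v : ℝ → ℝ) (a ζ : ℂ) :
    bInt ω (extremal ω v a) a ζ = ((‖bKer ω a ζ‖ * (ω ‖ζ‖ / v ‖ζ‖) : ℝ) : ℂ) := by
  rcases eq_or_ne (bKer ω a ζ) 0 with hB | hB
  · simp [bInt, hB]
  have hB' : (‖bKer ω a ζ‖ : ℂ) ≠ 0 := by exact_mod_cast norm_ne_zero_iff.2 hB
  have hconj : bKer ω a ζ * starRingEnd ℂ (bKer ω a ζ) = (‖bKer ω a ζ‖ : ℂ) ^ 2 :=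
    Complex.mul_conj' _
  push_cast [bInt, extremal]
  calc bKer ω a ζ / (‖bKer ω a ζ‖ * v ‖ζ‖) * starRingEnd ℂ (bKer ω a ζ) * ω ‖ζ‖
      = bKer ω a ζ * starRingEnd ℂ (bKer ω a ζ) / ‖bKer ω a ζ‖ * (ω ‖ζ‖ / v ‖ζ‖) := by ring
    _ = ‖bKer ω a ζ‖ * (ω ‖ζ‖ / v ‖ζ‖) := by rw [hconj, pow_two, mul_div_cancel_right₀ _ hB']

theorem kerMass_eq_enorm_bProj_extremal {a : ℂ} (hω : IsRadialWeight ω)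
    (hpos : ∀ r ∈ Ico (0 : ℝ) 1, 0 < v r)
    (hint : IntegrableOn (bInt ω (extremal ω v a) a) unitDisc) :
    kerMass ω v a = ENNReal.ofReal Real.pi * ‖bProj ω (extremal ω v a) a‖ₑ := by
  set φ : ℂ → ℝ := fun ζ => ‖bKer ω a ζ‖ * (ω ‖ζ‖ / v ‖ζ‖)
  have hbInt : bInt ω (extremal ω v a) a = fun ζ => (φ ζ : ℂ) := funext (bInt_extremal ω v a)
  have hφ_nonneg : 0 ≤ᵐ[volume.restrict unitDisc] φ := by
    filter_upwards [ae_restrict_mem measurableSet_unitDisc] with ζ hζ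
    exact mul_nonneg (norm_nonneg _) (div_nonneg (hω.apply_norm_nonneg hζ)
      (hpos _ (norm_mem_Ico_of_mem_unitDisc hζ)).le)
  have hφ_int : IntegrableOn φ unitDisc := (hbInt ▸ hint).re
  have hmass : kerMass ω v a = ‖∫ ζ in unitDisc, bInt ω (extremal ω v a) a ζ‖ₑ := by
    rw [hbInt, integral_complex_ofReal, ← ofReal_norm,
      Complex.norm_of_nonneg (integral_nonneg_of_ae hφ_nonneg),
      ofReal_integral_eq_lintegral_ofReal hφ_int hφ_nonneg, kerMass]
  rw [enorm_bProj, ← mul_assoc, ← ENNReal.ofReal_mul Real.pi_pos.le,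
    mul_inv_cancel₀ Real.pi_ne_zero, ENNReal.ofReal_one, one_mul, hmass]

theorem ProjBddH.exists_kerMass_le (h : ProjBddH ω v) (hω : IsRadialWeight ω)
    (hv : ContinuousOn v (Ico 0 1)) (hpos : ∀ r ∈ Ico (0 : ℝ) 1, 0 < v r) :
    ∃ C : ℝ, ∀ a ∈ unitDisc,
      ENNReal.ofReal (v ‖a‖) * kerMass ω v a ≤ ENNReal.ofReal C := by
  obtain ⟨C, -, hC⟩ := h
  refine ⟨Real.pi * C, fun a ha => ?_⟩
  set f := extremal ω v a
  have hf : wSup v f ≤ 1 := wSup_extremal_le_one ω hpos a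
  obtain ⟨hint, hdiff, hbound⟩ :=
    hC f (aestronglyMeasurable_extremal hω hv ha) (hf.trans_lt ENNReal.one_lt_top)
  have hcont : ContinuousOn (fun z => ENNReal.ofReal (‖bProj ω f z‖ * v ‖z‖)) unitDisc :=
    ENNReal.continuous_ofReal.comp_continuousOn
      (hdiff.continuousOn.norm.mul (continuousOn_comp_norm_unitDisc hv))
  have hpoint : ENNReal.ofReal (‖bProj ω f a‖ * v ‖a‖) ≤ wSup v (bProj ω f) :=
    le_essSup_restrict_of_continuousOn isOpen_unitDisc hcont ha
  calc ENNReal.ofReal (v ‖a‖) * kerMass ω v a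
      = ENNReal.ofReal Real.pi * ENNReal.ofReal (‖bProj ω f a‖ * v ‖a‖) := by
        rw [kerMass_eq_enorm_bProj_extremal hω hpos (hint a ha),
          ENNReal.ofReal_mul (norm_nonneg _), ofReal_norm]
        ring
    _ ≤ ENNReal.ofReal Real.pi * (ENNReal.ofReal C * wSup v f) := by
        gcongr
        exact hpoint.trans hbound
    _ ≤ ENNReal.ofReal Real.pi * (ENNReal.ofReal C * 1) := by gcongr
    _ = ENNReal.ofReal (Real.pi * C) := by rw [mul_one, ENNReal.ofReal_mul Real.pi_pos.le]

end Projection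

theorem stmt12_general (ω v : ℝ → ℝ) (hω : IsRadialWeight ω) (hv : ContinuousOn v (Ico 0 1))
    (hpos : ∀ r ∈ Ico (0 : ℝ) 1, 0 < v r) :
    ProjBddH ω v ↔
      ∃ C : ℝ, ∀ a ∈ unitDisc,
        ENNReal.ofReal (v ‖a‖) *
          ∫⁻ ζ in unitDisc,
            ENNReal.ofReal (‖bKer ω a ζ‖ * (ω ‖ζ‖ / v ‖ζ‖)) ≤
        ENNReal.ofReal C :=
  ⟨fun h => h.exists_kerMass_le hω hv hpos, fun ⟨_, hC⟩ => projBddH_of_kerMass_le hω hpos hC⟩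

/-- Proposition 3.2: `P_ω : L^∞_ν̂ → H^∞_ν̂` is bounded iff
`sup_{a∈𝔻} ν̂(a) ∫_𝔻 |B^ω_a(ζ)| ω(ζ)/ν̂(ζ) dA(ζ) < ∞`. -/
theorem stmt12 (ω ν : ℝ → ℝ) (hω : IsRadialWeight ω) (hν : IsRadialWeight ν) :
    ProjBddH ω (tl ν) ↔
      ∃ C : ℝ, ∀ a ∈ unitDisc,
        ENNReal.ofReal (tl ν ‖a‖) *
          ∫⁻ ζ in unitDisc,
            ENNReal.ofReal (‖bKer ω a ζ‖ * (ω ‖ζ‖ / tl ν ‖ζ‖)) ≤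
        ENNReal.ofReal C :=
  stmt12_general ω (tl ν) hω hν.continuousOn_tl hν.2.2
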